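/- Every closed PGA term is derivably equal, from the axioms PGA1–PGA4, to a closed PGA term of the form P or of the form P ; Q^ω, where P and Q are closed PGA terms in which the repetition operator does not occur. -/

import Mathlib

/-- Primitive instructions of PGA over a set `B` of basic instructions. -/
inductive PrimInstr (B : Type) : Type where
  | basic : B → PrimInstr B      -- plain basic instruction a
  | postest : B → PrimInstr B    -- positive test instruction +a
  | negtest : B → PrimInstr B    -- negative test instruction −a
  | jump : ℕ → PrimInstr B       -- forward jump instruction #l
  | halt : PrimInstr B           -- termination instruction !

/-- Closed PGA terms over a type `I` of (primitive) instructions. -/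
inductive PGA (I : Type) : Type where
  | instr : I → PGA I
  | concat : PGA I → PGA I → PGA I
  | rep : PGA I → PGA I

namespace PGA

/-- `P.pow n` is the (n+1)-fold repetition `P^(n+1)`. -/
def pow {I : Type} (P : PGA I) : ℕ → PGA I
  | 0 => P
  | n + 1 => .concat P (P.pow n)

/-- Derivable equality of closed PGA terms from the axioms PGA1–PGA4 by
equational logic. -/
inductive Eq {I : Type} : PGA I → PGA I → Prop where
  | refl (x : PGA I) : Eq x x
  | symm {x y : PGA I} : Eq x y → Eq y x
  | trans {x y z : PGA I} : Eq x y → Eq y z → Eq x z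
  | concat_congr {x x' y y' : PGA I} :
      Eq x x' → Eq y y' → Eq (.concat x y) (.concat x' y')
  | rep_congr {x y : PGA I} : Eq x y → Eq (.rep x) (.rep y)
  | pga1 (x y z : PGA I) : Eq (.concat (.concat x y) z) (.concat x (.concat y z))
  | pga2 (x : PGA I) (n : ℕ) : Eq (.rep (x.pow n)) (.rep x)
  | pga3 (x y : PGA I) : Eq (.concat (.rep x) y) (.rep x)
  | pga4 (x y : PGA I) : Eq (.rep (.concat x y)) (.concat x (.rep (.concat y x)))

/-- A closed PGA term in which the repetition operator does not occur. -/
def RepFree {I : Type} : PGA I → Prop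
  | .instr _ => True
  | .concat x y => RepFree x ∧ RepFree y
  | .rep _ => False

end PGA

/-!
Terms with a canonical form are closed under concatenation and repetition. The key point is that
`P ; Q^ω` absorbs every term concatenated on its right, by PGA1 and PGA3. Unfolding
`x^ω = x ; x^ω` (PGA2 with `n = 2`, and PGA4) therefore gives `(P ; Q^ω)^ω = P ; Q^ω`.
-/

namespace PGA

variable {I : Type}

local infixr:65 " ⨾ " => PGA.concat
local postfix:max "^ω" => PGA.rep
local infix:50 " ≃ₑ " => PGA.Eq

instance : Trans (Eq (I := I)) Eq Eq := ⟨Eq.trans⟩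

namespace Eq

theorem concat_congr_left {x x' : PGA I} (h : x ≃ₑ x') (y : PGA I) : x ⨾ y ≃ₑ x' ⨾ y :=
  concat_congr h (refl y)

theorem concat_congr_right (x : PGA I) {y y' : PGA I} (h : y ≃ₑ y') : x ⨾ y ≃ₑ x ⨾ y' :=
  concat_congr (refl x) h

theorem rep_unfold (x : PGA I) : x^ω ≃ₑ x ⨾ x^ω :=
  calc
    x^ω ≃ₑ (x ⨾ x)^ω := (pga2 x 1).symm
    _ ≃ₑ x ⨾ (x ⨾ x)^ω := pga4 x x
    _ ≃ₑ x ⨾ x^ω := concat_congr_right x (pga2 x 1)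

theorem concat_rep_concat (x y z : PGA I) : (x ⨾ y^ω) ⨾ z ≃ₑ x ⨾ y^ω :=
  calc
    (x ⨾ y^ω) ⨾ z ≃ₑ x ⨾ (y^ω ⨾ z) := pga1 x y^ω z
    _ ≃ₑ x ⨾ y^ω := concat_congr_right x (pga3 y z)

theorem rep_concat_rep (x y : PGA I) : (x ⨾ y^ω)^ω ≃ₑ x ⨾ y^ω :=
  calc
    (x ⨾ y^ω)^ω ≃ₑ (x ⨾ y^ω) ⨾ (x ⨾ y^ω)^ω := rep_unfold (x ⨾ y^ω)
    _ ≃ₑ x ⨾ y^ω := concat_rep_concat x y (x ⨾ y^ω)^ω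

end Eq

/-- `x` is derivably equal to a first canonical form: a repetition-free term `P`, or `P ; Q^ω`
with `P` and `Q` repetition-free. -/
def HasCanonicalForm (x : PGA I) : Prop :=
  (∃ P : PGA I, RepFree P ∧ x ≃ₑ P) ∨
    ∃ P Q : PGA I, RepFree P ∧ RepFree Q ∧ x ≃ₑ P ⨾ Q^ω

namespace HasCanonicalForm

theorem instr (a : I) : HasCanonicalForm (.instr a) :=
  .inl ⟨.instr a, trivial, .refl _⟩

theorem concat {x y : PGA I} (hx : HasCanonicalForm x) (hy : HasCanonicalForm y) :
    HasCanonicalForm (x ⨾ y) := by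
  rcases hx with ⟨P, hP, hxP⟩ | ⟨P, Q, hP, hQ, hxPQ⟩
  · rcases hy with ⟨R, hR, hyR⟩ | ⟨R, S, hR, hS, hyRS⟩
    · exact .inl ⟨P ⨾ R, ⟨hP, hR⟩, .concat_congr hxP hyR⟩
    · refine .inr ⟨P ⨾ R, S, ⟨hP, hR⟩, hS, ?_⟩
      calc
        x ⨾ y ≃ₑ P ⨾ (R ⨾ S^ω) := .concat_congr hxP hyRS
        _ ≃ₑ (P ⨾ R) ⨾ S^ω := (Eq.pga1 P R S^ω).symm
  · refine .inr ⟨P, Q, hP, hQ, ?_⟩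
    calc
      x ⨾ y ≃ₑ (P ⨾ Q^ω) ⨾ y := .concat_congr_left hxPQ y
      _ ≃ₑ P ⨾ Q^ω := .concat_rep_concat P Q y

theorem rep {x : PGA I} (hx : HasCanonicalForm x) : HasCanonicalForm x^ω := by
  rcases hx with ⟨P, hP, hxP⟩ | ⟨P, Q, hP, hQ, hxPQ⟩
  · exact .inr ⟨P, P, hP, hP, (Eq.rep_congr hxP).trans (.rep_unfold P)⟩
  · exact .inr ⟨P, Q, hP, hQ, (Eq.rep_congr hxPQ).trans (.rep_concat_rep P Q)⟩

end HasCanonicalForm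

end PGA

theorem canonical_form_general {I : Type} (x : PGA I) : PGA.HasCanonicalForm x := by
  induction x with
  | instr a => exact .instr a
  | concat _ _ hx hy => exact hx.concat hy
  | rep _ hx => exact hx.rep

/-- Every closed PGA term is derivably equal, from the axioms
PGA1–PGA4, to a closed PGA term of the form `P` or of the form `P ; Q^ω`,
where `P` and `Q` are closed PGA terms in which the repetition operator does
not occur. -/
theorem canonical_form (B : Type) (x : PGA (PrimInstr B)) :
    (∃ P : PGA (PrimInstr B), PGA.RepFree P ∧ PGA.Eq x P) ∨
    (∃ P Q : PGA (PrimInstr B), PGA.RepFree P ∧ PGA.RepFree Q ∧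
      PGA.Eq x (.concat P (.rep Q))) :=
  canonical_form_general x
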